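/- Let X be a Banach space having a biorthogonal system {(x_α, x_α*) : α ∈ I} ⊆ X × X* whose cardinality |I| is not a Kunen cardinal. Then there exists an equivalent norm on X which is not Ba(X_w)-measurable. -/

import Mathlib

/-- The σ-algebra on `I × I` generated by all rectangles `A ×ˢ B` with `A, B ⊆ I`. -/
def productSigma (I : Type*) : MeasurableSpace (I × I) :=
  MeasurableSpace.generateFrom {S : Set (I × I) | ∃ A B : Set I, S = A ×ˢ B}

/-- `|I|` is a Kunen cardinal. -/
def IsKunen (I : Type*) : Prop := productSigma I = ⊤

/-- The Baire σ-algebra of the weak topology of a normed space `X`. -/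
def BaW (X : Type*) [NormedAddCommGroup X] [NormedSpace ℝ X] : MeasurableSpace X :=
  ⨆ φ : X →L[ℝ] ℝ, MeasurableSpace.comap φ Real.measurableSpace

/-- `N` is an equivalent norm on `X`: a norm satisfying `c‖x‖ ≤ N x ≤ C‖x‖`
for some constants `c, C > 0`. -/
def IsEquivNorm {X : Type*} [NormedAddCommGroup X] [NormedSpace ℝ X] (N : X → ℝ) : Prop :=
  (∀ x y : X, N (x + y) ≤ N x + N y) ∧
  (∀ (a : ℝ) (x : X), N (a • x) = |a| * N x) ∧
  ∃ c C : ℝ, 0 < c ∧ 0 < C ∧ ∀ x : X, c * ‖x‖ ≤ N x ∧ N x ≤ C * ‖x‖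

/-!
Suppose that every equivalent norm is `Ba(X_w)`-measurable. For a continuous seminorm `q`, both
`‖·‖` and `‖·‖ + q` are equivalent norms, so `q` is measurable as well. Apply this to
`q = sup {|x_α* - 2 x_β*| : (α, β) ∈ T}`, where `T` is a set of off-diagonal pairs along which the
functionals `x_α*` are uniformly bounded. At `x_γ - 2 x_δ` the functional `x_α* - 2 x_β*` takes the
value `5` if `(γ, δ) = (α, β)`, and a value in `[-4, 4]` otherwise. Hence `T` is the preimage of
`{q > 4}` under `(γ, δ) ↦ x_γ - 2 x_δ`, and so belongs to the product σ-algebra. Every off-diagonal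
set is a countable union of such sets `T`; in particular the diagonal is measurable, and therefore
so is every subset of `I × I`.
-/

open Set MeasureTheory

section Kunen

variable {I : Type*} [MeasurableSpace I] [DiscreteMeasurableSpace I]

lemma productSigma_eq_prod : productSigma I = Prod.instMeasurableSpace := by
  rw [← generateFrom_prod, productSigma]
  congr 1
  ext S
  simp [image2, MeasurableSet.of_discrete, eq_comm]

lemma isKunen_of_discreteMeasurableSpace_prod [DiscreteMeasurableSpace (I × I)] : IsKunen I := by
  rw [IsKunen, productSigma_eq_prod]
  exact top_le_iff.1 fun S _ => MeasurableSet.of_discrete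

lemma discreteMeasurableSpace_prod_of_forall_disjoint_diagonal
    (h : ∀ S : Set (I × I), Disjoint S (diagonal I) → MeasurableSet S) :
    DiscreteMeasurableSpace (I × I) where
  forall_measurableSet S := by
    have h_diagonal : MeasurableSet (diagonal I) := (h _ disjoint_compl_left).of_compl
    have h_inter : S ∩ diagonal I = ({i | (i, i) ∈ S} ×ˢ univ) ∩ diagonal I := by
      ext ⟨α, β⟩
      simp only [mem_inter_iff, mem_diagonal_iff, mem_prod, mem_ofPred_eq, mem_univ, and_true]
      exact and_congr_left fun hαβ => hαβ ▸ Iff.rfl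
    rw [← inter_union_sdiff S (diagonal I), h_inter]
    exact ((MeasurableSet.of_discrete.prod .univ).inter h_diagonal).union (h _ disjoint_sdiff_left)

lemma discreteMeasurableSpace_prod_of_forall_subset_offDiag {J : ℕ → Set I} (hJ : Monotone J)
    (hJ_univ : ⋃ n, J n = univ) (h : ∀ n, ∀ T ⊆ (J n).offDiag, MeasurableSet T) :
    DiscreteMeasurableSpace (I × I) := by
  refine discreteMeasurableSpace_prod_of_forall_disjoint_diagonal fun S hS => ?_
  have h_cover : ⋃ n, J n ×ˢ J n = univ := by
    rw [iUnion_prod_of_monotone hJ hJ, hJ_univ, univ_prod_univ]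
  rw [← inter_univ S, ← h_cover, inter_iUnion]
  exact .iUnion fun n => h n _ fun p hp =>
    ⟨hp.2.1, hp.2.2, fun hp_diagonal => hS.notMem_of_mem_left hp.1 hp_diagonal⟩

end Kunen

section Baire

variable {X : Type*} [NormedAddCommGroup X] [NormedSpace ℝ X]

lemma measurable_baW_iff {Ω : Type*} [MeasurableSpace Ω] {f : Ω → X} :
    Measurable[_, BaW X] f ↔ ∀ φ : X →L[ℝ] ℝ, Measurable fun ω => φ (f ω) := by
  simp only [BaW, measurable_iff_comap_le, MeasurableSpace.comap_iSup, iSup_le_iff,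
    MeasurableSpace.comap_comp, Function.comp_def]

lemma measurable_baW_fst_sub_snd {ι κ : Type*} [MeasurableSpace ι] [DiscreteMeasurableSpace ι]
    [MeasurableSpace κ] [DiscreteMeasurableSpace κ] (u : ι → X) (v : κ → X) :
    Measurable[_, BaW X] fun p : ι × κ => u p.1 - v p.2 := by
  refine measurable_baW_iff.2 fun φ => ?_
  simp only [map_sub]
  have hu : Measurable fun i => φ (u i) := .of_discrete
  have hv : Measurable fun j => φ (v j) := .of_discrete
  exact (hu.comp measurable_fst).sub (hv.comp measurable_snd)

lemma isEquivNorm_norm_add_seminorm {q : Seminorm ℝ X} (hq : Continuous q) :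
    IsEquivNorm fun y => ‖y‖ + q y := by
  obtain ⟨C, hC, hqC⟩ := q.bound_of_continuous_normedSpace hq
  refine ⟨fun y z => ?_, fun a y => ?_, 1, 1 + C, one_pos, by positivity, fun y => ⟨?_, ?_⟩⟩
  · linarith [norm_add_le y z, map_add_le_add q y z]
  · simp only [norm_smul, map_smul_eq_mul, Real.norm_eq_abs, mul_add]
  · linarith [apply_nonneg q y]
  · linarith [hqC y]

lemma isEquivNorm_norm : IsEquivNorm fun y : X => ‖y‖ := by
  simpa using isEquivNorm_norm_add_seminorm (q := (0 : Seminorm ℝ X)) continuous_zero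

lemma measurable_seminorm_of_forall_isEquivNorm
    (hX : ∀ N : X → ℝ, IsEquivNorm N → Measurable[BaW X] N) {q : Seminorm ℝ X}
    (hq : Continuous q) : Measurable[BaW X] q := by
  let := BaW X
  simpa only [Pi.sub_def, add_sub_cancel_left] using
    (hX _ (isEquivNorm_norm_add_seminorm hq)).sub (hX _ isEquivNorm_norm)

lemma exists_continuous_seminorm_lt_iff {ι : Type*} {ψ : ι → X →L[ℝ] ℝ} {C : ℝ}
    (hψ : ∀ i, ‖ψ i‖ ≤ C) :
    ∃ q : Seminorm ℝ X, Continuous q ∧ ∀ a, 0 ≤ a → ∀ y, a < q y ↔ ∃ i, a < |ψ i y| := by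
  have h_le (i : ι) (y : X) : |ψ i y| ≤ C * ‖y‖ := (ψ i).le_of_opNorm_le (hψ i) y
  have h_bdd (y : X) : BddAbove (range fun i => |ψ i y|) :=
    ⟨C * ‖y‖, forall_mem_range.2 fun i => h_le i y⟩
  let p (i : ι) : Seminorm ℝ X := (normSeminorm ℝ ℝ).comp (ψ i : X →ₗ[ℝ] ℝ)
  have hp_apply (y : X) : (⨆ i, p i) y = ⨆ i, |ψ i y| :=
    Seminorm.iSup_apply (Seminorm.bddAbove_range_iff.2 h_bdd)
  refine ⟨⨆ i, p i, ?_, fun a ha y => ?_⟩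
  · refine Seminorm.continuous_of_le (q := C.toNNReal • normSeminorm ℝ X)
      (continuous_norm.const_smul C.toNNReal) fun y => ?_
    rw [hp_apply]
    have h_toNNReal : C * ‖y‖ ≤ C.toNNReal * ‖y‖ := by gcongr; exact Real.le_coe_toNNReal C
    exact Real.iSup_le (fun i => (h_le i y).trans h_toNNReal) (by positivity)
  · rw [hp_apply]
    refine ⟨fun h => ?_, fun ⟨i, hi⟩ => hi.trans_le (le_ciSup (h_bdd y) i)⟩
    contrapose! h
    exact Real.iSup_le h ha

lemma measurableSet_exists_lt_abs_apply
    (hX : ∀ N : X → ℝ, IsEquivNorm N → Measurable[BaW X] N) {ι : Type*} {ψ : ι → X →L[ℝ] ℝ}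
    {C : ℝ} (hψ : ∀ i, ‖ψ i‖ ≤ C) {a : ℝ} (ha : 0 ≤ a) :
    MeasurableSet[BaW X] {y | ∃ i, a < |ψ i y|} := by
  obtain ⟨q, hq, hq_lt⟩ := exists_continuous_seminorm_lt_iff hψ
  simp only [← hq_lt a ha]
  exact measurable_seminorm_of_forall_isEquivNorm hX hq measurableSet_Ioi

end Baire

/-- The family `(x α, xs α)` is a biorthogonal system, with `xs α` standing for `x_α*`. It supplies
the functionals `x_α* - 2 x_β*` that tell the vectors `x_γ - 2 x_δ` apart. The two cases of the
Kronecker delta are separate fields, so that no decidable equality on `I` is involved. -/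
structure IsBiorthogonal {X I : Type*} [AddCommGroup X] [Module ℝ X] [TopologicalSpace X]
    (x : I → X) (xs : I → X →L[ℝ] ℝ) : Prop where
  apply_self : ∀ α, xs α (x α) = 1
  apply_of_ne : ∀ α β, α ≠ β → xs α (x β) = 0

namespace IsBiorthogonal

lemma four_lt_abs_apply_iff {X I : Type*} [AddCommGroup X] [Module ℝ X] [TopologicalSpace X]
    {x : I → X} {xs : I → X →L[ℝ] ℝ} (h : IsBiorthogonal x xs) {α β : I} (hαβ : α ≠ β)
    (γ δ : I) :
    4 < |(xs α - (2 : ℝ) • xs β) (x γ - (2 : ℝ) • x δ)| ↔ (α, β) = (γ, δ) := by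
  classical
  have h_apply (i j : I) : xs i (x j) = if i = j then 1 else 0 := by
    split_ifs with hij
    · exact hij ▸ h.apply_self i
    · exact h.apply_of_ne i j hij
  simp only [sub_apply, smul_apply, map_sub, map_smul, smul_eq_mul, h_apply, Prod.mk.injEq]
  by_cases hαγ : α = γ <;> by_cases hαδ : α = δ <;> by_cases hβγ : β = γ <;>
    by_cases hβδ : β = δ <;> simp_all <;> norm_num

variable {X I : Type*} [NormedAddCommGroup X] [NormedSpace ℝ X] [MeasurableSpace I]
  [DiscreteMeasurableSpace I] {x : I → X} {xs : I → X →L[ℝ] ℝ}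

lemma measurableSet_of_subset_offDiag (h : IsBiorthogonal x xs)
    (hX : ∀ N : X → ℝ, IsEquivNorm N → Measurable[BaW X] N) {C : ℝ} {T : Set (I × I)}
    (hT : T ⊆ {i | ‖xs i‖ ≤ C}.offDiag) : MeasurableSet T := by
  let ψ (p : T) : X →L[ℝ] ℝ := xs p.1.1 - (2 : ℝ) • xs p.1.2
  have hψ (p : T) : ‖ψ p‖ ≤ C + 2 * C := by
    obtain ⟨hα, hβ, -⟩ := hT p.2
    calc ‖ψ p‖ ≤ ‖xs p.1.1‖ + ‖(2 : ℝ) • xs p.1.2‖ := norm_sub_le _ _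
      _ = ‖xs p.1.1‖ + 2 * ‖xs p.1.2‖ := by rw [norm_smul, Real.norm_two]
      _ ≤ C + 2 * C := by gcongr <;> assumption
  have hT_preimage : T = (fun p : I × I => x p.1 - (2 : ℝ) • x p.2) ⁻¹'
      {y | ∃ p, 4 < |ψ p y|} := by
    ext ⟨γ, δ⟩
    have hψ_iff (p : T) : 4 < |ψ p (x γ - (2 : ℝ) • x δ)| ↔ p.1 = (γ, δ) :=
      h.four_lt_abs_apply_iff (hT p.2).2.2 γ δ
    simp only [mem_preimage, mem_ofPred_eq, hψ_iff, Subtype.exists, exists_prop, exists_eq_right]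
  rw [hT_preimage]
  exact measurable_baW_fst_sub_snd x (fun i => (2 : ℝ) • x i)
    (measurableSet_exists_lt_abs_apply hX hψ zero_le_four)

lemma discreteMeasurableSpace_prod (h : IsBiorthogonal x xs)
    (hX : ∀ N : X → ℝ, IsEquivNorm N → Measurable[BaW X] N) :
    DiscreteMeasurableSpace (I × I) := by
  refine discreteMeasurableSpace_prod_of_forall_subset_offDiag
    (J := fun n : ℕ => {i | ‖xs i‖ ≤ n}) (fun m n hmn i hi => ?_) ?_
    fun n T hT => h.measurableSet_of_subset_offDiag hX hT
  · exact hi.out.trans (Nat.cast_le.2 hmn)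
  · exact iUnion_eq_univ_iff.2 fun i => exists_nat_ge ‖xs i‖

end IsBiorthogonal

theorem stmt7_general {X I : Type*} [NormedAddCommGroup X] [NormedSpace ℝ X] {x : I → X}
    {xs : I → X →L[ℝ] ℝ} (h : IsBiorthogonal x xs) (hI : ¬ IsKunen I) :
    ∃ N : X → ℝ, IsEquivNorm N ∧ ¬ Measurable[BaW X] N := by
  by_contra! hX
  let : MeasurableSpace I := ⊤
  have := h.discreteMeasurableSpace_prod hX
  exact hI isKunen_of_discreteMeasurableSpace_prod

/-- If a Banach space `X` has a biorthogonal system whose cardinality is not a Kunen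
cardinal, then there is an equivalent norm on `X` which is not `Ba(X_w)`-measurable. -/
theorem stmt7 (X : Type*) [NormedAddCommGroup X] [NormedSpace ℝ X] [CompleteSpace X]
    (I : Type*) (x : I → X) (xs : I → (X →L[ℝ] ℝ))
    (hbi : ∀ α β : I, (α = β → xs α (x β) = 1) ∧ (α ≠ β → xs α (x β) = 0))
    (hI : ¬ IsKunen I) :
    ∃ N : X → ℝ, IsEquivNorm N ∧
      ¬ @Measurable X ℝ (BaW X) Real.measurableSpace N :=
  stmt7_general ⟨fun α => (hbi α α).1 rfl, fun α β => (hbi α β).2⟩ hI
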